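/- arXiv:1210.4532 — 2 statements merged into one kernel-verified Lean document; each statement's English description precedes it below -/
import Mathlib

section
/- Let N ≥ 1 and let a, b : ℝ^N → ℝ^N be C² vector fields whose Lie bracket vanishes identically, [a,b] = 0. Define vector fields 𝒜, ℬ : ℝ^N × ℝ^N → ℝ^N × ℝ^N by 𝒜(y,w) = (a(y), −(Da(y))ᵀ·w) and ℬ(y,w) = (b(y), −(Db(y))ᵀ·w), where Da(y) denotes the Jacobian matrix of a at y. Then [𝒜,ℬ](y,w) = 0 for every (y,w) ∈ ℝ^N × ℝ^N. -/
/-!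
The first component of `[𝒜,ℬ](y,w)` is `[a,b](y)`. The coordinate of the second component along a
basis vector `e` is `-∑ k, C e k * w k`, where
`C e = D²b(a, e) + Db (Da e) - D²a(b, e) - Da (Db e)` at `y`; the terms `Db (Da e)` and `Da (Db e)` come
from differentiating the adjoint parts, which are linear in `w`
(`fderiv_adjointField_apply`, `sum_fderiv_mul_jacobianTransposeApply`). By the symmetry of the
second derivatives, `C e` is exactly the derivative of `y ↦ [a,b](y)` in the direction `e`, so it
vanishes with `[a,b]` (`fderiv_bracket_eq_zero`).
-/

open scoped BigOperators

/-- Lie bracket of two vector fields on a normed space: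
`[a,b](y) = Db(y)·a(y) − Da(y)·b(y)`. -/
noncomputable def lieBracket {E : Type*} [NormedAddCommGroup E] [NormedSpace ℝ E]
    (a b : E → E) (y : E) : E :=
  fderiv ℝ b y (a y) - fderiv ℝ a y (b y)

/-- `(Da(y))ᵀ · w`, the transpose of the Jacobian of `a` at `y` applied to `w`. -/
noncomputable def jacobianTransposeApply {N : ℕ}
    (a : (Fin N → ℝ) → (Fin N → ℝ)) (y w : Fin N → ℝ) : Fin N → ℝ :=
  fun j => ∑ i, fderiv ℝ a y (Pi.single j 1) i * w i

/-- The derivative of `(y,w) ↦ (a(y), −(Da(y))ᵀ·w)` at `p` in the direction `q`. -/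
lemma fderiv_adjointField_apply {N : ℕ} {a : (Fin N → ℝ) → (Fin N → ℝ)} (ha : ContDiff ℝ 2 a)
    (p q : (Fin N → ℝ) × (Fin N → ℝ)) :
    fderiv ℝ (fun p : (Fin N → ℝ) × (Fin N → ℝ) =>
        (a p.1, -jacobianTransposeApply a p.1 p.2)) p q =
      (fderiv ℝ a p.1 q.1, fun j => -∑ i,
        (fderiv ℝ (fderiv ℝ a) p.1 q.1 (Pi.single j 1) i * p.2 i +
          fderiv ℝ a p.1 (Pi.single j 1) i * q.2 i)) := by
  have h1 : HasFDerivAt a (fderiv ℝ a p.1) p.1 :=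
    (ha.differentiable (by norm_num) p.1).hasFDerivAt
  have h2 : HasFDerivAt (fderiv ℝ a) (fderiv ℝ (fderiv ℝ a) p.1) p.1 :=
    ((ha.fderiv_right (m := 1) (by norm_num)).differentiable (by norm_num) p.1).hasFDerivAt
  have hfst : HasFDerivAt (Prod.fst : (Fin N → ℝ) × (Fin N → ℝ) → _)
      (ContinuousLinearMap.fst ℝ (Fin N → ℝ) (Fin N → ℝ)) p := hasFDerivAt_fst
  have hsnd : HasFDerivAt (Prod.snd : (Fin N → ℝ) × (Fin N → ℝ) → _)
      (ContinuousLinearMap.snd ℝ (Fin N → ℝ) (Fin N → ℝ)) p := hasFDerivAt_snd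
  have h3 := h2.comp p hfst
  have hentry (j i : Fin N) :=
    (hasFDerivAt_pi'.1 (h3.clm_apply (hasFDerivAt_const (Pi.single j (1 : ℝ)) p)) i).mul
      (hasFDerivAt_pi'.1 hsnd i)
  have hadj := hasFDerivAt_pi.2 fun j => (HasFDerivAt.fun_sum (u := Finset.univ)
    fun i _ => hentry j i).neg
  have h := (h1.comp p hfst).prodMk hadj
  have hD := congrArg (fun L => L q) h.fderiv
  refine Eq.trans hD ?_
  refine Prod.ext rfl (funext fun j => ?_)
  simp [mul_comm, add_comm]

/-- The transposed Jacobian represents the adjoint: pairing `v` with `(Da(y))ᵀ·w`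
is the same as pairing `Da(y) v` with `w`. -/
lemma sum_fderiv_mul_jacobianTransposeApply {N : ℕ} (a : (Fin N → ℝ) → (Fin N → ℝ))
    (y w v : Fin N → ℝ) :
    ∑ i, v i * jacobianTransposeApply a y w i = ∑ k, fderiv ℝ a y v k * w k := by
  have hv (k : Fin N) : fderiv ℝ a y v k = ∑ i, v i * fderiv ℝ a y (Pi.single i 1) k := by
    conv_lhs => rw [pi_eq_sum_univ' v]
    simp [map_sum, Finset.sum_apply]
  simp only [jacobianTransposeApply, hv, Finset.mul_sum, Finset.sum_mul]
  rw [Finset.sum_comm]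
  simp only [mul_assoc]

/-- The identity `[a,b] = 0` differentiated at `y` in the direction `e`. -/
lemma fderiv_bracket_eq_zero {E : Type*} [NormedAddCommGroup E] [NormedSpace ℝ E] {a b : E → E}
    (ha : ContDiff ℝ 2 a) (hb : ContDiff ℝ 2 b) (hab : ∀ y, lieBracket a b y = 0) (y e : E) :
    fderiv ℝ (fderiv ℝ b) y (a y) e + fderiv ℝ b y (fderiv ℝ a y e) -
      (fderiv ℝ (fderiv ℝ a) y (b y) e + fderiv ℝ a y (fderiv ℝ b y e)) = 0 := by
  have h1 {f : E → E} (hf : ContDiff ℝ 2 f) : HasFDerivAt f (fderiv ℝ f y) y :=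
    (hf.differentiable (by norm_num) y).hasFDerivAt
  have h2 {f : E → E} (hf : ContDiff ℝ 2 f) :
      HasFDerivAt (fderiv ℝ f) (fderiv ℝ (fderiv ℝ f) y) y :=
    ((hf.fderiv_right (m := 1) (by norm_num)).differentiable (by norm_num) y).hasFDerivAt
  have hsymm {f : E → E} (hf : ContDiff ℝ 2 f) (u v : E) :
      fderiv ℝ (fderiv ℝ f) y u v = fderiv ℝ (fderiv ℝ f) y v u :=
    (hf.contDiffAt.isSymmSndFDerivAt (by simp)).eq u v
  have hbr := ((h2 hb).clm_apply (h1 ha)).sub ((h2 ha).clm_apply (h1 hb))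
  have hzero : HasFDerivAt (fun z => fderiv ℝ b z (a z) - fderiv ℝ a z (b z))
      (0 : E →L[ℝ] E) y := by
    have : (fun z => fderiv ℝ b z (a z) - fderiv ℝ a z (b z)) = fun _ => (0 : E) :=
      funext hab
    rw [this]
    exact hasFDerivAt_const 0 y
  have he := congrArg (fun L => L e) (hbr.unique hzero)
  simp only [sub_apply, add_apply,
    ContinuousLinearMap.comp_apply, ContinuousLinearMap.flip_apply,
    zero_apply] at he
  rw [hsymm hb (a y) e, hsymm ha (b y) e, ← he]
  abel

/-- If `a`, `b` are `C²` commuting vector fields on `ℝ^N`, then the fields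
`𝒜(y,w) = (a(y), −(Da(y))ᵀ·w)` and `ℬ(y,w) = (b(y), −(Db(y))ᵀ·w)` on `ℝ^N × ℝ^N`
also commute. -/
theorem commuting_adjoint_fields {N : ℕ} (hN : 1 ≤ N)
    (a b : (Fin N → ℝ) → (Fin N → ℝ))
    (ha : ContDiff ℝ 2 a) (hb : ContDiff ℝ 2 b)
    (hab : ∀ y, lieBracket a b y = 0) :
    ∀ yw : (Fin N → ℝ) × (Fin N → ℝ),
      lieBracket
        (fun p : (Fin N → ℝ) × (Fin N → ℝ) => (a p.1, -jacobianTransposeApply a p.1 p.2))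
        (fun p : (Fin N → ℝ) × (Fin N → ℝ) => (b p.1, -jacobianTransposeApply b p.1 p.2))
        yw = 0 := by
  rintro ⟨y, w⟩
  rw [lieBracket, fderiv_adjointField_apply ha, fderiv_adjointField_apply hb]
  refine Prod.ext (hab y) (funext fun j => ?_)
  have hC (k : Fin N) := congrFun (fderiv_bracket_eq_zero ha hb hab y (Pi.single j 1)) k
  have hA := sum_fderiv_mul_jacobianTransposeApply a y w (fderiv ℝ b y (Pi.single j 1))
  have hB := sum_fderiv_mul_jacobianTransposeApply b y w (fderiv ℝ a y (Pi.single j 1))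
  -- The derivative of `[a,b] = 0` in the direction of the `j`-th basis vector, paired with `w`.
  have hsum : ∑ k, (fderiv ℝ (fderiv ℝ b) y (a y) (Pi.single j 1) k +
      fderiv ℝ b y (fderiv ℝ a y (Pi.single j 1)) k -
      (fderiv ℝ (fderiv ℝ a) y (b y) (Pi.single j 1) k +
        fderiv ℝ a y (fderiv ℝ b y (Pi.single j 1)) k)) * w k = 0 :=
    Finset.sum_eq_zero fun k _ => mul_eq_zero_of_left (hC k) _
  simp only [add_mul, sub_mul, Finset.sum_add_distrib, Finset.sum_sub_distrib] at hsum
  simp only [Prod.snd_sub, Pi.sub_apply, Pi.neg_apply, Finset.sum_add_distrib, mul_neg,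
    Finset.sum_neg_distrib, hA, hB, Prod.snd_zero, Pi.zero_apply]
  linarith
end

section
/- Let T > 0, A ⊆ ℝ^l compact, and F : ℝ^n × ℝ^m × ℝ^l → ℝ^n Lipschitz in (ξ,η) with constant L uniformly in a ∈ A and continuous in a ∈ A for each (ξ,η). Fix ξ₀ ∈ ℝ^n and a continuous u : [0,T] → ℝ^m. For a measurable a : [0,T] → A let ξ(ξ₀,u,a) denote the unique Carathéodory solution of ξ(t) = ξ₀ + ∫₀ᵗ F(ξ(s),u(s),a(s)) ds. If (a_k) is a sequence of measurable maps [0,T] → A with ∫₀ᵀ |a_k(s) − a(s)| ds → 0, then ∫₀ᵀ |ξ(ξ₀,u,a_k)(t) − ξ(ξ₀,u,a)(t)| dt → 0; that is, the map a ↦ ξ(ξ₀,u,a) is continuous from L¹(0,T;A) to L¹(0,T;ℝ^n). -/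
/-!
Put `c k s = F (ξ s) (u s) (ak k s) - F (ξ s) (u s) (a s)`.  Subtracting the two integral equations
and using the Lipschitz bound in the state gives
`‖ξk k t - ξ t‖ ≤ L * ∫ s in 0..t, ‖ξk k s - ξ s‖ + ∫ s in 0..T, ‖c k s‖`,
so Grönwall's inequality, applied to the primitive of `‖ξk k - ξ‖`, bounds the `L¹` distance of the
solutions by a quantity that is continuous in `∫ ‖c k‖` and vanishes with it (`integral_le_gronwall`).

That `∫ ‖c k‖ → 0` is the continuity of the superposition operator of
`G (s, y) = F (ξ s) (u s) y`.  This `G` is jointly continuous on the compact set `[0,T] × A`, hence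
bounded and uniformly continuous there, and therefore satisfies, for every `ε > 0`, an affine modulus
estimate `‖G (s, y) - G (s, z)‖ ≤ ε + C * ‖y - z‖` (`exists_affine_modulus`).  Integrating it turns
`L¹` convergence of the controls directly into `L¹` convergence of `c k`, with no passage to
almost everywhere convergent subsequences.
-/

open Set MeasureTheory Filter

/-- A Carathéodory solution of `ξ(t) = ξ₀ + ∫₀ᵗ F(ξ(s),u(s),a(s)) ds` on `[0,T]`. -/
def IsCarSol {n m l : ℕ} (T : ℝ)
    (F : (Fin n → ℝ) → (Fin m → ℝ) → (Fin l → ℝ) → (Fin n → ℝ))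
    (ξ₀ : Fin n → ℝ) (u : ℝ → Fin m → ℝ) (a : ℝ → Fin l → ℝ)
    (ξ : ℝ → Fin n → ℝ) : Prop :=
  ContinuousOn ξ (Icc 0 T) ∧
    ∀ t ∈ Icc 0 T, ξ t = ξ₀ + ∫ s in (0:ℝ)..t, F (ξ s) (u s) (a s)

/-- Joint continuity of `(s, y) ↦ F (x s) (u s) y` along continuous curves `x` and `u`. -/
lemma continuousOn_along {n m l : ℕ} {T : ℝ} {A : Set (Fin l → ℝ)}
    {F : (Fin n → ℝ) → (Fin m → ℝ) → (Fin l → ℝ) → (Fin n → ℝ)} {L : NNReal}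
    (hLip : ∀ a ∈ A, LipschitzWith L (fun p : (Fin n → ℝ) × (Fin m → ℝ) => F p.1 p.2 a))
    (hFa : ∀ ξ η, ContinuousOn (F ξ η) A)
    {x : ℝ → Fin n → ℝ} {u : ℝ → Fin m → ℝ}
    (hx : ContinuousOn x (Icc 0 T)) (hu : ContinuousOn u (Icc 0 T)) :
    ContinuousOn (fun p : ℝ × (Fin l → ℝ) => F (x p.1) (u p.1) p.2) (Icc 0 T ×ˢ A) := by
  have h : ContinuousOn (fun p : ((Fin n → ℝ) × (Fin m → ℝ)) × (Fin l → ℝ) => F p.1.1 p.1.2 p.2)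
      (univ ×ˢ A) :=
    continuousOn_prod_of_continuousOn_lipschitzOnWith _ L (fun p _ => hFa p.1 p.2)
      (fun a ha => (hLip a ha).lipschitzOnWith)
  have h2 : ContinuousOn (fun p : ℝ × (Fin l → ℝ) => ((x p.1, u p.1), p.2)) (Icc 0 T ×ˢ A) :=
    ((hx.comp continuousOn_fst fun p hp => hp.1).prodMk
      (hu.comp continuousOn_fst fun p hp => hp.1)).prodMk continuousOn_snd
  exact h.comp h2 fun p hp => ⟨mem_univ _, hp.2⟩

lemma integrableOn_superposition {E : Type*} [NormedAddCommGroup E] [SecondCountableTopology E]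
    [MeasurableSpace E] [BorelSpace E] {l : ℕ} {T : ℝ} {A : Set (Fin l → ℝ)} (hA : IsCompact A)
    {G : ℝ × (Fin l → ℝ) → E} (hG : ContinuousOn G (Icc 0 T ×ˢ A))
    {b : ℝ → Fin l → ℝ} (hb : Measurable b) (hbA : ∀ t, b t ∈ A) :
    IntegrableOn (fun s => G (s, b s)) (Icc 0 T) := by
  classical
  have hS : IsCompact (Icc (0 : ℝ) T ×ˢ A) := isCompact_Icc.prod hA
  obtain ⟨C, hC⟩ := hS.exists_bound_of_continuousOn hG
  refine Integrable.of_bound (C := C) ?_ ?_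
  · -- `G` is only controlled on the closed set `[0,T] × A`, so it is first extended by zero.
    have h1 : Measurable ((Icc (0 : ℝ) T ×ˢ A).piecewise G 0) :=
      hG.measurable_piecewise continuousOn_const hS.measurableSet
    have h2 := (h1.comp (measurable_id.prodMk hb)).aestronglyMeasurable
      (μ := volume.restrict (Icc 0 T))
    refine h2.congr (ae_restrict_of_forall_mem measurableSet_Icc fun s hs => ?_)
    exact piecewise_eq_of_mem _ _ _ (show (s, b s) ∈ Icc (0 : ℝ) T ×ˢ A from ⟨hs, hbA s⟩)
  · exact ae_restrict_of_forall_mem measurableSet_Icc fun s hs => hC _ ⟨hs, hbA s⟩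

/-- Uniform continuity handles `‖y - z‖ < δ`; for `‖y - z‖ ≥ δ` the bound `2 * M` on the difference
is absorbed by the slope `2 * M / δ`. -/
lemma exists_affine_modulus {E : Type*} [NormedAddCommGroup E] {l : ℕ} {T : ℝ}
    {A : Set (Fin l → ℝ)} (hA : IsCompact A)
    {G : ℝ × (Fin l → ℝ) → E} (hG : ContinuousOn G (Icc 0 T ×ˢ A)) {ε : ℝ} (hε : 0 < ε) :
    ∃ C : ℝ, ∀ s ∈ Icc 0 T, ∀ y ∈ A, ∀ z ∈ A, ‖G (s, y) - G (s, z)‖ ≤ ε + C * ‖y - z‖ := by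
  have hS : IsCompact (Icc (0 : ℝ) T ×ˢ A) := isCompact_Icc.prod hA
  obtain ⟨M, hM⟩ := hS.exists_bound_of_continuousOn hG
  obtain ⟨δ, hδ, h⟩ := Metric.uniformContinuousOn_iff.1
    (hS.uniformContinuousOn_of_continuous hG) ε hε
  refine ⟨2 * M / δ, fun s hs y hy z hz => ?_⟩
  have h1 := hM (s, y) ⟨hs, hy⟩
  have h2 := hM (s, z) ⟨hs, hz⟩
  have hM0 : 0 ≤ M := (norm_nonneg _).trans h1
  rcases lt_or_ge ‖y - z‖ δ with hlt | hge
  · have h3 := h (s, y) ⟨hs, hy⟩ (s, z) ⟨hs, hz⟩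
      (by simpa [Prod.dist_eq, dist_eq_norm, hδ] using hlt)
    rw [dist_eq_norm] at h3
    have : 0 ≤ 2 * M / δ * ‖y - z‖ := by positivity
    linarith
  · have h3 : 2 * M ≤ 2 * M / δ * ‖y - z‖ := by
      rw [div_mul_eq_mul_div, le_div_iff₀ hδ]
      gcongr
    have := norm_sub_le (G (s, y)) (G (s, z))
    linarith

/-- Continuity in `L¹` of the superposition operator `b ↦ G (·, b ·)` on controls valued in a
compact set. -/
lemma tendsto_superposition {E : Type*} [NormedAddCommGroup E] [SecondCountableTopology E]
    [MeasurableSpace E] [BorelSpace E] {l : ℕ} {T : ℝ} (hT : 0 < T)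
    {A : Set (Fin l → ℝ)} (hA : IsCompact A)
    {G : ℝ × (Fin l → ℝ) → E} (hG : ContinuousOn G (Icc 0 T ×ˢ A))
    {a : ℝ → Fin l → ℝ} (ha : Measurable a) (haA : ∀ t, a t ∈ A)
    {ak : ℕ → ℝ → Fin l → ℝ} (hak : ∀ k, Measurable (ak k)) (hakA : ∀ k t, ak k t ∈ A)
    (hconv : Tendsto (fun k => ∫ s in (0:ℝ)..T, ‖ak k s - a s‖) atTop (nhds 0)) :
    Tendsto (fun k => ∫ s in (0:ℝ)..T, ‖G (s, ak k s) - G (s, a s)‖) atTop (nhds 0) := by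
  have key : ∀ ε > 0, ∃ C : ℝ, ∀ k, ∫ s in (0:ℝ)..T, ‖G (s, ak k s) - G (s, a s)‖ ≤
      ε * T + C * ∫ s in (0:ℝ)..T, ‖ak k s - a s‖ := by
    intro ε hε
    obtain ⟨C, hC⟩ := exists_affine_modulus hA hG hε
    refine ⟨C, fun k => ?_⟩
    have i1 : IntervalIntegrable (fun s => ‖G (s, ak k s) - G (s, a s)‖) volume 0 T :=
      (intervalIntegrable_iff_integrableOn_Icc_of_le hT.le).2
        ((integrableOn_superposition hA hG (hak k) (hakA k)).sub
          (integrableOn_superposition hA hG ha haA)).norm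
    have i2 : IntervalIntegrable (fun s => C * ‖ak k s - a s‖) volume 0 T :=
      ((intervalIntegrable_iff_integrableOn_Icc_of_le hT.le).2
        ((integrableOn_superposition hA (G := fun p => p.2) continuousOn_snd (hak k) (hakA k)).sub
          (integrableOn_superposition hA (G := fun p => p.2) continuousOn_snd
            ha haA)).norm).const_mul C
    have i3 : IntervalIntegrable (fun _ : ℝ => ε) volume 0 T := intervalIntegrable_const
    calc _ ≤ ∫ s in (0:ℝ)..T, (ε + C * ‖ak k s - a s‖) :=
          intervalIntegral.integral_mono_on hT.le i1 (i3.add i2)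
            fun s hs => hC s hs _ (hakA k s) _ (haA s)
      _ = _ := by
          rw [intervalIntegral.integral_add i3 i2, intervalIntegral.integral_const_mul,
            intervalIntegral.integral_const, smul_eq_mul, sub_zero, mul_comm]
  rw [Metric.tendsto_atTop]
  intro ε hε
  obtain ⟨C, hC⟩ := key (ε / (2 * T)) (by positivity)
  have hC0 : Tendsto (fun k => C * ∫ s in (0:ℝ)..T, ‖ak k s - a s‖) atTop (nhds 0) := by
    simpa using hconv.const_mul C
  obtain ⟨N, hN⟩ := eventually_atTop.1 (hC0.eventually_lt_const (half_pos hε))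
  refine ⟨N, fun k hk => ?_⟩
  have h0 : 0 ≤ ∫ s in (0:ℝ)..T, ‖G (s, ak k s) - G (s, a s)‖ :=
    intervalIntegral.integral_nonneg hT.le fun s _ => norm_nonneg _
  rw [Real.dist_eq, sub_zero, abs_of_nonneg h0]
  have h1 := hC k
  have h2 := hN k hk
  have h3 : ε / (2 * T) * T = ε / 2 := by field_simp
  linarith

/-- Integral Grönwall inequality, stated for the primitive of `d`. -/
lemma integral_le_gronwall {T K δ : ℝ} (hT : 0 < T) {d : ℝ → ℝ} (hd : ContinuousOn d (Icc 0 T))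
    (h0 : ∀ t ∈ Icc 0 T, 0 ≤ d t)
    (h : ∀ t ∈ Icc 0 T, d t ≤ K * (∫ s in (0:ℝ)..t, d s) + δ) :
    ∫ s in (0:ℝ)..T, d s ≤ gronwallBound 0 K δ T := by
  have hint : IntegrableOn d (Icc 0 T) := hd.integrableOn_Icc
  have hcont : ContinuousOn (fun t => ∫ s in (0:ℝ)..t, d s) (Icc 0 T) := by
    have := intervalIntegral.continuousOn_primitive_interval (a := 0) (b := T) (f := d)
      (μ := volume) (by rwa [uIcc_of_le hT.le])
    rwa [uIcc_of_le hT.le] at this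
  have hnn : ∀ t ∈ Icc 0 T, 0 ≤ ∫ s in (0:ℝ)..t, d s := fun t ht =>
    intervalIntegral.integral_nonneg ht.1 fun s hs => h0 s ⟨hs.1, hs.2.trans ht.2⟩
  have hderiv : ∀ t ∈ Ico 0 T, HasDerivWithinAt (fun t => ∫ s in (0:ℝ)..t, d s) (d t) (Ici t) t := by
    intro t ht
    have hsub : Icc t T ⊆ Icc 0 T := Icc_subset_Icc_left ht.1
    have hnhds : Icc t T ∈ nhdsWithin t (Ioi t) :=
      mem_of_superset (Ioo_mem_nhdsGT ht.2) Ioo_subset_Icc_self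
    have hw : ContinuousWithinAt d (Ioi t) t :=
      ((hd t ⟨ht.1, ht.2.le⟩).mono hsub).mono_of_mem_nhdsWithin hnhds
    refine intervalIntegral.integral_hasDerivWithinAt_right (t := Ioi t) ?_ ?_ hw
    · exact (intervalIntegrable_iff_integrableOn_Icc_of_le ht.1).2
        (hint.mono_set (Icc_subset_Icc_right ht.2.le))
    · exact ⟨Icc t T, hnhds, (hint.mono_set hsub).aestronglyMeasurable⟩
  have := norm_le_gronwallBound_of_norm_deriv_right_le (δ := 0) (K := K) (ε := δ) hcont hderiv
    (by simp) (fun t ht => by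
      have ht' : t ∈ Icc 0 T := ⟨ht.1, ht.2.le⟩
      rw [Real.norm_of_nonneg (h0 t ht'), Real.norm_of_nonneg (hnn t ht')]
      exact h t ht') T ⟨hT.le, le_rfl⟩
  rw [sub_zero] at this
  exact (le_abs_self _).trans this

/-- Continuous dependence of Carathéodory solutions on the control `a` in `L¹`:
if `aₖ → a` in `L¹(0,T;A)`, then the corresponding solutions converge in `L¹(0,T;ℝⁿ)`. -/
theorem caratheodory_continuous_in_a {n m l : ℕ}
    (T : ℝ) (hT : 0 < T)
    (A : Set (Fin l → ℝ)) (hA : IsCompact A)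
    (F : (Fin n → ℝ) → (Fin m → ℝ) → (Fin l → ℝ) → (Fin n → ℝ))
    (L : NNReal)
    (hLip : ∀ a ∈ A, LipschitzWith L
      (fun p : (Fin n → ℝ) × (Fin m → ℝ) => F p.1 p.2 a))
    (hFa : ∀ ξ η, ContinuousOn (F ξ η) A)
    (ξ₀ : Fin n → ℝ)
    (u : ℝ → Fin m → ℝ) (hu : ContinuousOn u (Icc 0 T))
    (a : ℝ → Fin l → ℝ) (ha : Measurable a) (haA : ∀ t, a t ∈ A)
    (ak : ℕ → ℝ → Fin l → ℝ) (hak : ∀ k, Measurable (ak k))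
    (hakA : ∀ k t, ak k t ∈ A)
    (ξ : ℝ → Fin n → ℝ) (hξ : IsCarSol T F ξ₀ u a ξ)
    (ξk : ℕ → ℝ → Fin n → ℝ) (hξk : ∀ k, IsCarSol T F ξ₀ u (ak k) (ξk k))
    (hconv : Tendsto (fun k => ∫ s in (0:ℝ)..T, ‖ak k s - a s‖) atTop (nhds 0)) :
    Tendsto (fun k => ∫ t in (0:ℝ)..T, ‖ξk k t - ξ t‖) atTop (nhds 0) := by
  set G : ℝ × (Fin l → ℝ) → (Fin n → ℝ) := fun p => F (ξ p.1) (u p.1) p.2 with hGdef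
  have hG : ContinuousOn G (Icc 0 T ×ˢ A) := continuousOn_along hLip hFa hξ.1 hu
  have hc := tendsto_superposition hT hA hG ha haA hak hakA hconv
  have hbound : ∀ k, ∫ t in (0:ℝ)..T, ‖ξk k t - ξ t‖ ≤
      gronwallBound 0 L (∫ s in (0:ℝ)..T, ‖G (s, ak k s) - G (s, a s)‖) T := by
    intro k
    have hd : ContinuousOn (fun t => ‖ξk k t - ξ t‖) (Icc 0 T) := ((hξk k).1.sub hξ.1).norm
    refine integral_le_gronwall hT hd (fun t _ => norm_nonneg _) fun t ht => ?_
    have hsub : Icc 0 t ⊆ Icc 0 T := Icc_subset_Icc_right ht.2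
    have j1 : IntegrableOn (fun s => F (ξk k s) (u s) (ak k s)) (Icc 0 T) :=
      integrableOn_superposition hA (continuousOn_along hLip hFa (hξk k).1 hu) (hak k) (hakA k)
    have j2 : IntegrableOn (fun s => G (s, ak k s)) (Icc 0 T) :=
      integrableOn_superposition hA hG (hak k) (hakA k)
    have j3 : IntegrableOn (fun s => G (s, a s)) (Icc 0 T) :=
      integrableOn_superposition hA hG ha haA
    have j4 : IntegrableOn (fun s => ‖G (s, ak k s) - G (s, a s)‖) (Icc 0 T) := (j2.sub j3).norm
    have restr : ∀ {E : Type} [NormedAddCommGroup E] {f : ℝ → E}, IntegrableOn f (Icc 0 T) →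
        IntervalIntegrable f volume 0 t := fun hf =>
      (intervalIntegrable_iff_integrableOn_Icc_of_le ht.1).2 (hf.mono_set hsub)
    have i4 := restr j4
    have i5 : IntervalIntegrable (fun s => (L : ℝ) * ‖ξk k s - ξ s‖) volume 0 t :=
      (restr hd.integrableOn_Icc).const_mul _
    have hmono : ∫ s in (0:ℝ)..t, ‖G (s, ak k s) - G (s, a s)‖ ≤
        ∫ s in (0:ℝ)..T, ‖G (s, ak k s) - G (s, a s)‖ :=
      intervalIntegral.integral_mono_interval le_rfl ht.1 ht.2
        (Eventually.of_forall fun s => norm_nonneg _)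
        ((intervalIntegrable_iff_integrableOn_Icc_of_le hT.le).2 j4)
    have hdiff : ξk k t - ξ t = ∫ s in (0:ℝ)..t, (F (ξk k s) (u s) (ak k s) - G (s, a s)) := by
      rw [intervalIntegral.integral_sub (restr j1) (restr j3), (hξk k).2 t ht, hξ.2 t ht]
      exact add_sub_add_left_eq_sub _ _ _
    calc ‖ξk k t - ξ t‖
        ≤ ∫ s in (0:ℝ)..t, ‖F (ξk k s) (u s) (ak k s) - G (s, a s)‖ := by
          rw [hdiff]
          exact intervalIntegral.norm_integral_le_integral_norm ht.1
      _ ≤ ∫ s in (0:ℝ)..t, ((L : ℝ) * ‖ξk k s - ξ s‖ + ‖G (s, ak k s) - G (s, a s)‖) := by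
          refine intervalIntegral.integral_mono_on ht.1 (restr (j1.sub j3).norm) (i5.add i4)
            fun s _ => ?_
          have h1 := (hLip _ (hakA k s)).dist_le_mul (ξk k s, u s) (ξ s, u s)
          rw [Prod.dist_eq, dist_self, max_eq_left dist_nonneg, dist_eq_norm, dist_eq_norm] at h1
          exact (norm_sub_le_norm_sub_add_norm_sub _ (G (s, ak k s)) _).trans (by gcongr)
      _ = L * (∫ s in (0:ℝ)..t, ‖ξk k s - ξ s‖) +
            ∫ s in (0:ℝ)..t, ‖G (s, ak k s) - G (s, a s)‖ := by
          rw [intervalIntegral.integral_add i5 i4, intervalIntegral.integral_const_mul]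
      _ ≤ _ := by gcongr
  refine squeeze_zero (fun k => intervalIntegral.integral_nonneg hT.le fun t _ => norm_nonneg _)
    hbound ?_
  have := ((gronwallBound_continuous_ε 0 L T).tendsto 0).comp hc
  rwa [gronwallBound_ε0_δ0] at this
end
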